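/- For all reals ρ₁, ρ₂ with 0 < ρ₁ < 1 and 0 < ρ₂ < 1 and every left-c.e. real α, if α is total ρ₁-speedable then α is total ρ₂-speedable; that is, whether a left-c.e. real is total ρ-speedable does not depend on the choice of ρ ∈ (0,1). -/

import Mathlib

/-- A real is left-c.e. if some computable nondecreasing sequence of rationals converges to it. -/
def LeftCE (α : ℝ) : Prop :=
  ∃ a : ℕ → ℚ, Computable a ∧ Monotone a ∧
    Filter.Tendsto (fun n => (a n : ℝ)) Filter.atTop (nhds α)

/-- `α` is total `ρ`-speedable: there is a nondecreasing total computable `g : ℚ → ℚ`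
with `q < g q < α` for every rational `q < α` and
`liminf_{q ↗ α} (α - g q)/(α - q) ≤ ρ`, the liminf taken over rationals `q`
tending to `α` from below. -/
def TotalRhoSpeedable (α ρ : ℝ) : Prop :=
  ∃ g : ℚ → ℚ, Computable g ∧ Monotone g ∧
    (∀ q : ℚ, (q : ℝ) < α → (q : ℝ) < (g q : ℝ) ∧ (g q : ℝ) < α) ∧
    Filter.liminf (fun q : ℚ => (α - (g q : ℝ)) / (α - (q : ℝ)))
      (Filter.comap (fun q : ℚ => (q : ℝ)) (nhdsWithin α (Set.Iio α))) ≤ ρ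

/-!
Let `L < 1` be the limit inferior of the ratios `(α - g q) / (α - q)` for the given speed-up `g`.
Moving `q` by `c` times the step `g q - q` turns a ratio `u` into `1 - c * (1 - u)`. For `c`
slightly below `1 / (1 - L)` the new ratios are eventually positive, so the amplified map `a`
stays below `α`, and frequently close to the small number `1 - c * (1 - L)`.

The map `a` need not be monotone, and its running supremum need not be computable. However
`a q + (c - 1) * q` is monotone, so `a` descends at a bounded rate, and its maximum over a fine
finite grid left of `r` dominates all earlier values of `a` up to a small multiple of `α - r`: the
mesh may be chosen proportional to `a r - r`, a computable lower bound for `α - r`. The map obtained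
in this way is again not monotone, but every computable map on `ℚ` becomes monotone when it is
clamped at the rationals one after the other in the order of their enumeration. The new value at `q`
lies between old values at some `p ≤ q` and some `r ≥ q`, which preserves the required bounds.
-/

open Encodable
open scoped Topology

section General

variable {β γ σ : Type*} [Primcodable β] [Primcodable γ] [Primcodable σ]

theorem computablePred_comp {p : γ → Prop} (hp : ComputablePred p) {f : β → γ}
    (hf : Computable f) : ComputablePred fun x => p (f x) :=
  ComputablePred.computable_of_manyOneReducible (ManyOneReducible.mk p hf) hp

theorem computable_ite {p : β → Prop} [DecidablePred p] (hp : ComputablePred p) {f g : β → σ}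
    (hf : Computable f) (hg : Computable g) : Computable fun x => if p x then f x else g x :=
  (Computable.cond hp.decide hf hg).of_eq fun _ => Bool.cond_decide ..

theorem computable_of_computablePred_graph {τ : Type*} [Denumerable τ] {f : β → τ}
    (hf : ComputablePred fun x : β × τ => f x.1 = x.2) : Computable f := by
  classical
  have hgraph : ComputablePred fun x : β × ℕ => f x.1 = Denumerable.ofNat τ x.2 :=
    computablePred_comp hf
      (Computable.fst.pair ((Computable.ofNat τ).comp Computable.snd))
  have hex (b) : ∃ n, f b = Denumerable.ofNat τ n := ⟨encode (f b), by simp⟩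
  exact ((Computable.ofNat τ).comp (Computable.find hgraph hex)).of_eq
    fun b => (Nat.find_spec (hex b)).symm

theorem computable_count {p : ℕ → Prop} [DecidablePred p] (hp : ComputablePred p) :
    Computable (Nat.count p) := by
  have hstep : Computable fun x : ℕ × ℕ × ℕ => x.2.2 + if p x.2.1 then 1 else 0 :=
    Primrec.nat_add.to_comp.comp (Computable.snd.comp Computable.snd)
      (computable_ite (computablePred_comp hp (Computable.fst.comp Computable.snd))
        (Computable.const 1) (Computable.const 0))
  refine (Computable.nat_rec Computable.id (Computable.const 0) hstep.to₂).of_eq fun n => ?_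
  induction n with
  | zero => rfl
  | succ n ih => rw [Nat.count_succ, ← ih]; rfl

theorem computable_nth {p : ℕ → Prop} (hp : ComputablePred p) (hinf : (Set.ofPred p).Infinite) :
    Computable (Nat.nth p) := by
  classical
  have hpred : ComputablePred fun x : ℕ × ℕ => x.1 < Nat.count p (x.2 + 1) :=
    computablePred_comp Primrec.nat_lt.computablePred (Computable.fst.pair
      ((computable_count hp).comp (Computable.succ.comp Computable.snd)))
  have hcount (n m : ℕ) : n < Nat.count p (m + 1) ↔ Nat.nth p n ≤ m :=
    (Nat.lt_nth_iff_count_lt hinf).trans Nat.lt_succ_iff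
  have hex (n) : ∃ m, n < Nat.count p (m + 1) := ⟨Nat.nth p n, (hcount _ _).2 le_rfl⟩
  refine (Computable.find hpred hex).of_eq fun n => ?_
  rw [Nat.find_eq_iff]
  simp [hcount]

end General

section Encoding

/-- The denumerable structure derived from an encoding of an infinite type renumbers the codes in
increasing order. `Computable` on `ℚ` refers to this renumbering, hence not directly to numerators
and denominators. -/
theorem encode_ofNat_eq_nth {τ : Type*} [e : Encodable τ] [Infinite τ] (n : ℕ) :
    letI := Denumerable.ofEncodableOfInfinite τ
    e.encode (Denumerable.ofNat τ n) = Nat.nth (· ∈ Set.range e.encode) n := by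
  have hinf : (Set.range e.encode).Infinite := Set.infinite_range_of_injective e.encode_injective
  let := hinf.to_subtype
  let := decidableRangeEncode τ
  let := Nat.Subtype.denumerable (Set.range e.encode)
  let := Denumerable.ofEncodableOfInfinite τ
  calc e.encode (Denumerable.ofNat τ n)
    _ = e.encode ((equivRangeEncode τ).symm (Denumerable.ofNat (Set.range e.encode) n)) :=
      congrArg e.encode (Denumerable.ofEquiv_ofNat _ (equivRangeEncode τ) n)
    _ = Denumerable.ofNat (Set.range e.encode) n :=
      congrArg Subtype.val ((equivRangeEncode τ).apply_symm_apply _)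
    _ = Nat.Subtype.ofNat (Set.range e.encode) n :=
      congrArg Subtype.val (Denumerable.ofEquiv_ofNat ℕ _ n)
    _ = Nat.nth (· ∈ Set.range e.encode) n := by
      rw [Nat.nth_eq_orderIsoOfNat (p := (· ∈ Set.range e.encode)) hinf]
      exact congrArg Subtype.val Nat.Subtype.orderIsoOfNat_apply.symm

theorem computable_encode_of_computablePred_range {τ : Type*} [e : Encodable τ] [Infinite τ]
    (hrange : ComputablePred (· ∈ Set.range e.encode)) :
    letI := Denumerable.ofEncodableOfInfinite τ
    Computable e.encode := by
  have hinf : (Set.range e.encode).Infinite := Set.infinite_range_of_injective e.encode_injective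
  let := Denumerable.ofEncodableOfInfinite τ
  exact ((computable_nth hrange hinf).comp Computable.encode).of_eq fun a => by
    rw [← encode_ofNat_eq_nth, Denumerable.ofNat_encode]

end Encoding

section ComputableOrder

variable {β γ : Type*} [Primcodable β] [Primcodable γ] [LinearOrder γ]

theorem computable_max (hle : ComputablePred fun x : γ × γ => x.1 ≤ x.2) {f g : β → γ}
    (hf : Computable f) (hg : Computable g) : Computable fun x => max (f x) (g x) :=
  (computable_ite (computablePred_comp hle (hf.pair hg)) hg hf).of_eq fun _ => (max_def _ _).symm

theorem computable_min (hle : ComputablePred fun x : γ × γ => x.1 ≤ x.2) {f g : β → γ}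
    (hf : Computable f) (hg : Computable g) : Computable fun x => min (f x) (g x) :=
  (computable_ite (computablePred_comp hle (hf.pair hg)) hf hg).of_eq fun _ => (min_def _ _).symm

theorem computable_partialSups (hle : ComputablePred fun x : γ × γ => x.1 ≤ x.2)
    {f : β → ℕ → γ} (hf : Computable₂ f) : Computable₂ fun b n => partialSups (f b) n := by
  have hmax : Computable fun x : (β × ℕ) × ℕ × γ => max x.2.2 (f x.1.1 (x.2.1 + 1)) :=
    computable_max hle (Computable.snd.comp Computable.snd)
      (hf.comp (Computable.fst.comp Computable.fst)
        (Computable.succ.comp (Computable.fst.comp Computable.snd)))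
  refine (Computable.nat_rec Computable.snd (hf.comp Computable.fst (Computable.const 0))
    hmax.to₂).of_eq fun x => ?_
  obtain ⟨b, n⟩ := x
  induction n with
  | zero => rfl
  | succ n ih => exact (congrArg (max · (f b (n + 1))) ih).trans (partialSups_add_one _ _).symm

end ComputableOrder

section Integer

theorem encode_int (n : ℤ) :
    encode n = if 0 ≤ n then 2 * n.natAbs else 2 * n.natAbs - 1 := by
  cases n with
  | ofNat n => change 2 * n = _; simp
  | negSucc n => change 2 * n + 1 = _; simp; omega

theorem primrec_int_toNat : Primrec Int.toNat := by
  refine (Primrec.ite (c := fun n : ℤ => encode n % 2 = 0) (Primrec.eq.comp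
    (Primrec.nat_mod.comp Primrec.encode (Primrec.const 2)) (Primrec.const 0))
    (Primrec.nat_div.comp Primrec.encode (Primrec.const 2)) (Primrec.const 0)).of_eq fun n => ?_
  rw [encode_int]
  split_ifs <;> omega

theorem primrec_int_natAbs : Primrec Int.natAbs := by
  refine (Primrec.nat_div.comp (Primrec.succ.comp Primrec.encode) (Primrec.const 2)).of_eq
    fun n : ℤ => ?_
  rw [encode_int]
  split_ifs <;> omega

theorem primrec_int_toNat_neg : Primrec fun n : ℤ => (-n).toNat :=
  (Primrec.nat_sub.comp primrec_int_natAbs primrec_int_toNat).of_eq fun n => by omega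

theorem primrec_int_subNatNat : Primrec₂ Int.subNatNat := by
  refine Primrec.encode_iff.1 ?_
  have htwice {f : ℕ × ℕ → ℕ} (hf : Primrec f) : Primrec fun x => 2 * f x :=
    Primrec.nat_mul.comp (Primrec.const 2) hf
  refine (Primrec.ite (Primrec.nat_le.comp Primrec.snd Primrec.fst)
    (htwice Primrec.nat_sub)
    (Primrec.pred.comp (htwice (Primrec.nat_sub.comp Primrec.snd Primrec.fst)))).of_eq fun x => ?_
  rw [encode_int, Int.subNatNat_eq_coe]
  split_ifs <;> simp only [Nat.pred_eq_sub_one] <;> omega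

theorem primrec_int_natCast : Primrec ((↑) : ℕ → ℤ) :=
  (primrec_int_subNatNat.comp Primrec.id (Primrec.const 0)).of_eq fun _ => by
    simp only [id, Int.subNatNat_eq_coe, Nat.cast_zero, sub_zero]

theorem primrec_int_add : Primrec₂ ((· + ·) : ℤ → ℤ → ℤ) := by
  refine (primrec_int_subNatNat.comp₂
    (Primrec.nat_add.comp₂ (primrec_int_toNat.comp₂ Primrec₂.left)
      (primrec_int_toNat.comp₂ Primrec₂.right))
    (Primrec.nat_add.comp₂ (primrec_int_toNat_neg.comp₂ Primrec₂.left)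
      (primrec_int_toNat_neg.comp₂ Primrec₂.right))).of_eq fun a b => ?_
  rw [Int.subNatNat_eq_coe]
  omega

theorem primrec_int_mul : Primrec₂ ((· * ·) : ℤ → ℤ → ℤ) := by
  have hpos₁ := primrec_int_toNat.comp₂ (Primrec₂.left (α := ℤ) (β := ℤ))
  have hneg₁ := primrec_int_toNat_neg.comp₂ (Primrec₂.left (α := ℤ) (β := ℤ))
  have hpos₂ := primrec_int_toNat.comp₂ (Primrec₂.right (α := ℤ) (β := ℤ))
  have hneg₂ := primrec_int_toNat_neg.comp₂ (Primrec₂.right (α := ℤ) (β := ℤ))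
  refine (primrec_int_subNatNat.comp₂
    (Primrec.nat_add.comp₂ (Primrec.nat_mul.comp₂ hpos₁ hpos₂) (Primrec.nat_mul.comp₂ hneg₁ hneg₂))
    (Primrec.nat_add.comp₂ (Primrec.nat_mul.comp₂ hpos₁ hneg₂)
      (Primrec.nat_mul.comp₂ hneg₁ hpos₂))).of_eq fun a b => ?_
  rw [Int.subNatNat_eq_coe]
  push_cast
  conv_rhs => rw [← Int.toNat_sub_toNat_neg a, ← Int.toNat_sub_toNat_neg b]
  ring

theorem primrecRel_int_le : PrimrecRel ((· ≤ ·) : ℤ → ℤ → Prop) := by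
  refine (Primrec.nat_le.comp₂
    (Primrec.nat_add.comp₂ (primrec_int_toNat.comp₂ Primrec₂.left)
      (primrec_int_toNat_neg.comp₂ Primrec₂.right))
    (Primrec.nat_add.comp₂ (primrec_int_toNat.comp₂ Primrec₂.right)
      (primrec_int_toNat_neg.comp₂ Primrec₂.left))).of_eq fun x => ?_
  omega

end Integer

section Rational

theorem primrecRel_dvd : PrimrecRel ((· ∣ ·) : ℕ → ℕ → Prop) :=
  (Primrec.eq.comp (Primrec.nat_mod.comp Primrec.snd Primrec.fst) (Primrec.const 0)).of_eq
    fun _ => Nat.dvd_iff_mod_eq_zero.symm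

theorem coprime_iff_forall_mem_range {a b : ℕ} :
    a.Coprime b ↔ ∀ k ∈ List.range (a + b + 1), ¬(k ∣ a ∧ k ∣ b ∧ k ≠ 1) := by
  simp only [List.mem_range]
  constructor
  · rintro h k - ⟨ha, hb, hk⟩
    exact hk (Nat.eq_one_of_dvd_coprimes h ha hb)
  · intro h
    by_contra hne
    refine h (a.gcd b) ?_ ⟨a.gcd_dvd_left b, a.gcd_dvd_right b, hne⟩
    rcases a.eq_zero_or_pos with rfl | ha
    · rw [Nat.gcd_zero_left]; omega
    · have := Nat.gcd_le_left b ha; omega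

theorem primrecRel_coprime : PrimrecRel Nat.Coprime := by
  have hdvd : PrimrecRel fun (k : ℕ) (x : ℕ × ℕ) => ¬(k ∣ x.1 ∧ k ∣ x.2 ∧ k ≠ 1) :=
    ((primrecRel_dvd.comp Primrec.fst (Primrec.fst.comp Primrec.snd)).and
      ((primrecRel_dvd.comp Primrec.fst (Primrec.snd.comp Primrec.snd)).and
        (Primrec.eq.comp Primrec.fst (Primrec.const 1)).not)).not
  exact (hdvd.forall_mem_list.comp
    (Primrec.list_range.comp (Primrec.succ.comp (Primrec.nat_add.comp Primrec.fst Primrec.snd)))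
    Primrec.id).of_eq fun _ => coprime_iff_forall_mem_range.symm

theorem encode_rat (q : ℚ) : Rat.instEncodable.encode q = Nat.pair (encode q.num) q.den := rfl

theorem mem_range_encode_rat {m : ℕ} :
    m ∈ Set.range Rat.instEncodable.encode ↔
      m.unpair.2 ≠ 0 ∧ ((m.unpair.1 + 1) / 2).Coprime m.unpair.2 := by
  have hnatAbs (n : ℤ) : (encode n + 1) / 2 = n.natAbs := by
    rw [encode_int]
    split_ifs <;> omega
  constructor
  · rintro ⟨q, rfl⟩
    rw [encode_rat, Nat.unpair_pair, hnatAbs]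
    exact ⟨q.den_nz, q.reduced⟩
  · rintro ⟨hden, hcoprime⟩
    refine ⟨⟨Denumerable.ofNat ℤ m.unpair.1, m.unpair.2, hden, ?_⟩, ?_⟩
    · rwa [← hnatAbs, Denumerable.encode_ofNat]
    · simp only [encode_rat, Denumerable.encode_ofNat, Nat.pair_unpair]

theorem primrecPred_mem_range_encode_rat :
    PrimrecPred (· ∈ Set.range Rat.instEncodable.encode) := by
  have hnum : Primrec fun m : ℕ => (m.unpair.1 + 1) / 2 := Primrec.nat_div.comp
    (Primrec.succ.comp (Primrec.fst.comp Primrec.unpair)) (Primrec.const 2)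
  have hden : Primrec fun m : ℕ => m.unpair.2 := Primrec.snd.comp Primrec.unpair
  exact ((Primrec.eq.comp hden (Primrec.const 0)).not.and
    (primrecRel_coprime.comp hnum hden)).of_eq fun _ => mem_range_encode_rat.symm

theorem computable_encode_rat : Computable (Rat.instEncodable.encode) :=
  computable_encode_of_computablePred_range primrecPred_mem_range_encode_rat.computablePred

theorem computable_rat_num : Computable Rat.num :=
  ((Primrec.ofNat ℤ).comp (Primrec.fst.comp Primrec.unpair)).to_comp.comp computable_encode_rat
    |>.of_eq fun q => by rw [encode_rat, Nat.unpair_pair, Denumerable.ofNat_encode]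

theorem computable_rat_den : Computable Rat.den :=
  ((Primrec.snd.comp Primrec.unpair).to_comp.comp computable_encode_rat).of_eq fun q => by
    rw [encode_rat, Nat.unpair_pair]

theorem computable_mkRat : Computable₂ mkRat := by
  have hsucc : Computable fun x : ℤ × ℕ => mkRat x.1 (x.2 + 1) := by
    have hcross : ComputablePred fun x : (ℤ × ℕ) × ℚ =>
        x.1.1 * x.2.den = x.2.num * (x.1.2 + 1 : ℕ) :=
      computablePred_comp Primrec.eq.computablePred
        ((primrec_int_mul.to_comp.comp (Computable.fst.comp Computable.fst)
          (primrec_int_natCast.to_comp.comp (computable_rat_den.comp Computable.snd))).pair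
        (primrec_int_mul.to_comp.comp (computable_rat_num.comp Computable.snd)
          (primrec_int_natCast.to_comp.comp
            (Computable.succ.comp (Computable.snd.comp Computable.fst)))))
    refine computable_of_computablePred_graph (hcross.of_eq fun x => ?_)
    conv_rhs => rw [← x.2.mkRat_self, Rat.mkRat_eq_iff x.1.2.succ_ne_zero x.2.den_nz]
  refine (computable_ite
    (Primrec.eq.comp Primrec.snd (Primrec.const 0)).computablePred (Computable.const 0)
    (hsucc.comp (Computable.fst.pair (Computable.pred.comp Computable.snd)))).of_eq fun x => ?_
  obtain ⟨n, d⟩ := x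
  cases d <;> simp

theorem computable_rat_add : Computable₂ ((· + ·) : ℚ → ℚ → ℚ) :=
  (computable_mkRat.comp
    (primrec_int_add.to_comp.comp
      (primrec_int_mul.to_comp.comp (computable_rat_num.comp Computable.fst)
        (primrec_int_natCast.to_comp.comp (computable_rat_den.comp Computable.snd)))
      (primrec_int_mul.to_comp.comp (computable_rat_num.comp Computable.snd)
        (primrec_int_natCast.to_comp.comp (computable_rat_den.comp Computable.fst))))
    (Primrec.nat_mul.to_comp.comp (computable_rat_den.comp Computable.fst)
      (computable_rat_den.comp Computable.snd))).of_eq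
    fun x => (Rat.add_def' x.1 x.2).symm

theorem computable_rat_mul : Computable₂ ((· * ·) : ℚ → ℚ → ℚ) :=
  (computable_mkRat.comp
    (primrec_int_mul.to_comp.comp (computable_rat_num.comp Computable.fst)
      (computable_rat_num.comp Computable.snd))
    (Primrec.nat_mul.to_comp.comp (computable_rat_den.comp Computable.fst)
      (computable_rat_den.comp Computable.snd))).of_eq
    fun x => (Rat.mul_def' x.1 x.2).symm

theorem computable_rat_sub : Computable₂ ((· - ·) : ℚ → ℚ → ℚ) :=
  (computable_rat_add.comp Computable.fst
    (computable_rat_mul.comp (Computable.const (-1)) Computable.snd)).of_eq fun x => by ring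

theorem computable_rat_natCast : Computable ((↑) : ℕ → ℚ) :=
  (computable_mkRat.comp (primrec_int_natCast.to_comp.comp Computable.id)
    (Computable.const 1)).of_eq fun n => by simp only [id, Rat.mkRat_one, Int.cast_natCast]

theorem computablePred_rat_le : ComputablePred fun x : ℚ × ℚ => x.1 ≤ x.2 :=
  (computablePred_comp primrecRel_int_le.computablePred
    ((primrec_int_mul.to_comp.comp (computable_rat_num.comp Computable.fst)
      (primrec_int_natCast.to_comp.comp (computable_rat_den.comp Computable.snd))).pair
    (primrec_int_mul.to_comp.comp (computable_rat_num.comp Computable.snd)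
      (primrec_int_natCast.to_comp.comp (computable_rat_den.comp Computable.fst))))).of_eq
    fun x => (Rat.le_iff x.1 x.2).symm

end Rational

section Clamp

variable {ι β : Type*} [LinearOrder ι] [LinearOrder β]

/-- `f` modified so that its value at each point left of `a` is at most `f a`, and at each point
right of `a` at least `f a`. -/
def clampAt (f : ι → β) (a x : ι) : β :=
  if x ≤ a then min (f x) (f a) else max (f x) (f a)

/-- The point `a` takes part in no violation of the monotonicity of `f`. -/
def IsPivot (f : ι → β) (a : ι) : Prop :=
  (∀ x ≤ a, f x ≤ f a) ∧ ∀ x, a ≤ x → f a ≤ f x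

theorem clampAt_self (f : ι → β) (a : ι) : clampAt f a a = f a := by simp [clampAt]

theorem isPivot_clampAt_self (f : ι → β) (a : ι) : IsPivot (clampAt f a) a := by
  refine ⟨fun x hx => ?_, fun x hx => ?_⟩ <;> rw [clampAt_self, clampAt]
  · rw [if_pos hx]
    exact min_le_right _ _
  · split_ifs with hxa
    · rw [le_antisymm hxa hx, min_self]
    · exact le_max_right _ _

theorem IsPivot.clampAt_eq {f : ι → β} {b : ι} (hb : IsPivot f b) (a : ι) :
    clampAt f a b = f b := by
  rw [clampAt]
  split_ifs with hba
  · exact min_eq_left (hb.2 a hba)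
  · exact max_eq_left (hb.1 a (le_of_not_ge hba))

theorem IsPivot.isPivot_clampAt {f : ι → β} {b : ι} (hb : IsPivot f b) (a : ι) :
    IsPivot (clampAt f a) b := by
  refine ⟨fun x hx => ?_, fun x hx => ?_⟩ <;> rw [hb.clampAt_eq, clampAt] <;>
    split_ifs with hxa
  · exact min_le_of_left_le (hb.1 x hx)
  · exact max_le (hb.1 x hx) (hb.1 a ((le_of_not_ge hxa).trans hx))
  · exact le_min (hb.2 x hx) (hb.2 a (hx.trans hxa))
  · exact le_max_of_le_left (hb.2 x hx)

theorem exists_le_clampAt_le {f g : ι → β} {x : ι} (a : ι)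
    (hg : ∀ x, (∃ p ≤ x, g x ≤ f p) ∧ ∃ r, x ≤ r ∧ f r ≤ g x) :
    (∃ p ≤ x, clampAt g a x ≤ f p) ∧ ∃ r, x ≤ r ∧ f r ≤ clampAt g a x := by
  rw [clampAt]
  obtain ⟨⟨p, hpx, hp⟩, r, hxr, hr⟩ := hg x
  obtain ⟨⟨p', hpa, hp'⟩, r', har, hr'⟩ := hg a
  split_ifs with hxa
  · refine ⟨⟨p, hpx, min_le_of_left_le hp⟩, ?_⟩
    rcases min_choice (g x) (g a) with h | h <;> rw [h]
    exacts [⟨r, hxr, hr⟩, ⟨r', hxa.trans har, hr'⟩]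
  · refine ⟨?_, ⟨r, hxr, le_max_of_le_left hr⟩⟩
    rcases max_choice (g x) (g a) with h | h <;> rw [h]
    exacts [⟨p, hpx, hp⟩, ⟨p', hpa.trans (le_of_not_ge hxa), hp'⟩]

variable [Denumerable ι]

/-- The result of clamping `f` at the first `k` points of `ι` one after the other. -/
def clampStage (f : ι → β) : ℕ → ι → β
  | 0 => f
  | k + 1 => clampAt (clampStage f k) (Denumerable.ofNat ι k)

/-- The pointwise limit of `clampStage f`: the value at `x` no longer changes once `x` has been
reached in the enumeration of `ι`. -/
def monotonize (f : ι → β) (x : ι) : β := clampStage f (encode x) x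

theorem isPivot_clampStage (f : ι → β) {x : ι} {k : ℕ} (hk : encode x < k) :
    IsPivot (clampStage f k) x := by
  induction k, hk using Nat.le_induction with
  | base =>
    rw [clampStage, Denumerable.ofNat_encode]
    exact isPivot_clampAt_self _ _
  | succ k _ ih => exact ih.isPivot_clampAt _

theorem clampStage_eq_monotonize (f : ι → β) {x : ι} {k : ℕ} (hk : encode x ≤ k) :
    clampStage f k x = monotonize f x := by
  induction k, hk using Nat.le_induction with
  | base => rfl
  | succ k hk ih =>
    rw [clampStage, ← ih]
    rcases hk.eq_or_lt with rfl | hlt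
    · rw [Denumerable.ofNat_encode, clampAt_self]
    · exact (isPivot_clampStage f hlt).clampAt_eq _

theorem monotone_monotonize (f : ι → β) : Monotone (monotonize f) := by
  intro x y hxy
  have hx : encode x < encode x + encode y + 1 := by omega
  rw [← clampStage_eq_monotonize f hx.le,
    ← clampStage_eq_monotonize f (show encode y ≤ encode x + encode y + 1 by omega)]
  exact (isPivot_clampStage f hx).2 y hxy

theorem exists_le_monotonize_le (f : ι → β) (x : ι) :
    (∃ p ≤ x, monotonize f x ≤ f p) ∧ ∃ r, x ≤ r ∧ f r ≤ monotonize f x := by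
  suffices h : ∀ k x, (∃ p ≤ x, clampStage f k x ≤ f p) ∧ ∃ r, x ≤ r ∧ f r ≤ clampStage f k x from
    h _ x
  intro k
  induction k with
  | zero => exact fun x => ⟨⟨x, le_rfl, le_rfl⟩, x, le_rfl, le_rfl⟩
  | succ k ih => exact fun x => exists_le_clampAt_le _ ih

/-- `clampStage f k x`, with the values of `monotonize f` at the first points of `ι` looked up in
the table `l`; this exhibits `monotonize f` as a course-of-values recursion. The default of `getD`
is irrelevant as long as `k ≤ l.length`. -/
def clampFromTable (f : ι → β) (x : ι) (l : List β) : ℕ → β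
  | 0 => f x
  | k + 1 =>
    let v := clampFromTable f x l k
    let w := l[k]?.getD v
    if x ≤ Denumerable.ofNat ι k then min v w else max v w

theorem clampFromTable_eq_clampStage (f : ι → β) (x : ι) {n k : ℕ} (hk : k ≤ n) :
    clampFromTable f x ((List.range n).map fun i => monotonize f (Denumerable.ofNat ι i)) k =
      clampStage f k x := by
  induction k with
  | zero => rfl
  | succ k ih =>
    have hpivot : clampStage f k (Denumerable.ofNat ι k) = monotonize f (Denumerable.ofNat ι k) :=
      clampStage_eq_monotonize f (Denumerable.encode_ofNat k).le
    simp only [clampFromTable, ih (Nat.le_of_succ_le hk), List.getElem?_map,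
      List.getElem?_range (Nat.lt_of_succ_le hk), Option.map_some, Option.getD_some, clampStage,
      clampAt, hpivot]

end Clamp

section ComputableMonotonize

variable {ι γ : Type*} [Denumerable ι] [LinearOrder ι] [Primcodable γ] [LinearOrder γ]

theorem computable_clampFromTable (hι : ComputablePred fun x : ι × ι => x.1 ≤ x.2)
    (hγ : ComputablePred fun x : γ × γ => x.1 ≤ x.2) {f : ι → γ} (hf : Computable f) :
    Computable fun y : ι × List γ × ℕ => clampFromTable f y.1 y.2.1 y.2.2 := by
  have hx : Computable fun z : (ι × List γ × ℕ) × ℕ × γ => z.1.1 :=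
    Computable.fst.comp Computable.fst
  have hi : Computable fun z : (ι × List γ × ℕ) × ℕ × γ => z.2.1 :=
    Computable.fst.comp Computable.snd
  have hv : Computable fun z : (ι × List γ × ℕ) × ℕ × γ => z.2.2 :=
    Computable.snd.comp Computable.snd
  have hw : Computable fun z : (ι × List γ × ℕ) × ℕ × γ => z.1.2.1[z.2.1]?.getD z.2.2 :=
    Computable.option_getD (Computable.list_getElem?.comp
      (Computable.fst.comp (Computable.snd.comp Computable.fst)) hi) hv
  have hstep : Computable fun z : (ι × List γ × ℕ) × ℕ × γ =>
      let w := z.1.2.1[z.2.1]?.getD z.2.2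
      if z.1.1 ≤ Denumerable.ofNat ι z.2.1 then min z.2.2 w else max z.2.2 w :=
    computable_ite (computablePred_comp hι (hx.pair ((Computable.ofNat ι).comp hi)))
      (computable_min hγ hv hw) (computable_max hγ hv hw)
  refine (Computable.nat_rec (Computable.snd.comp Computable.snd) (hf.comp Computable.fst)
    hstep.to₂).of_eq fun y => ?_
  obtain ⟨x, l, k⟩ := y
  induction k with
  | zero => rfl
  | succ k ih => simp only [clampFromTable, ← ih]

theorem computable_monotonize (hι : ComputablePred fun x : ι × ι => x.1 ≤ x.2)
    (hγ : ComputablePred fun x : γ × γ => x.1 ≤ x.2) {f : ι → γ} (hf : Computable f) :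
    Computable (monotonize f) := by
  have hlength : Computable fun y : Unit × List γ => y.2.length :=
    Computable.list_length.comp Computable.snd
  have hnext : Computable fun y : Unit × List γ =>
      clampFromTable f (Denumerable.ofNat ι y.2.length) y.2 y.2.length :=
    (computable_clampFromTable hι hγ hf).comp
      (((Computable.ofNat ι).comp hlength).pair (Computable.snd.pair hlength))
  have hvalues : Computable₂ fun (_ : Unit) n => monotonize f (Denumerable.ofNat ι n) :=
    Computable.nat_strong_rec _ (Computable.option_some.comp hnext).to₂ fun _ n => by
      simp only [List.length_map, List.length_range]
      rw [clampFromTable_eq_clampStage f _ le_rfl,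
        clampStage_eq_monotonize f (Denumerable.encode_ofNat n).le]
  exact (hvalues.comp (Computable.const ()) Computable.encode).of_eq fun x => by
    rw [Denumerable.ofNat_encode]

end ComputableMonotonize

section GridMax

variable {𝕜 : Type*} [Field 𝕜] [LinearOrder 𝕜]

/-- The maximum of `a` over the `n + 1` grid points `r, r - d, …, r - n * d`. -/
def gridMax (a : 𝕜 → 𝕜) (r d : 𝕜) (n : ℕ) : 𝕜 := partialSups (fun i : ℕ => a (r - i * d)) n

theorem le_gridMax (a : 𝕜 → 𝕜) (r d : 𝕜) (n : ℕ) : a r ≤ gridMax a r d n := by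
  have hzero : a r = a (r - (0 : ℕ) * d) := by rw [Nat.cast_zero, zero_mul, sub_zero]
  exact hzero.trans_le (le_partialSups_of_le (fun i : ℕ => a (r - i * d)) n.zero_le)

theorem exists_gridMax_eq [IsStrictOrderedRing 𝕜] (a : 𝕜 → 𝕜) (r : 𝕜) {d : 𝕜} (hd : 0 ≤ d)
    (n : ℕ) : ∃ p ≤ r, gridMax a r d n = a p := by
  obtain ⟨i, -, hi⟩ := exists_partialSups_eq (fun i : ℕ => a (r - i * d)) n
  exact ⟨r - i * d, sub_le_self _ (mul_nonneg i.cast_nonneg hd), hi⟩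

theorem sub_le_gridMax [IsStrictOrderedRing 𝕜] [FloorSemiring 𝕜] {a : 𝕜 → 𝕜} {K : 𝕜}
    (hK : 0 ≤ K) (ha : Monotone fun q => a q + K * q) {q r d : 𝕜} (hd : 0 < d) (hqr : q ≤ r)
    {n : ℕ} (hn : r - q ≤ n * d) : a q - K * d ≤ gridMax a r d n := by
  set i := ⌊(r - q) / d⌋₊
  have hin : i ≤ n := Nat.floor_le_of_le ((div_le_iff₀ hd).2 hn)
  have hle : i * d ≤ r - q :=
    (le_div_iff₀ hd).1 (Nat.floor_le (div_nonneg (sub_nonneg.2 hqr) hd.le))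
  have hlt : r - q < (i + 1) * d := (div_lt_iff₀ hd).1 (Nat.lt_floor_add_one _)
  calc a q - K * d
    _ ≤ a q - K * (r - i * d - q) := by gcongr; linarith
    _ ≤ a (r - i * d) := by linarith [ha (show q ≤ r - i * d by linarith)]
    _ ≤ gridMax a r d n := le_partialSups_of_le (fun i : ℕ => a (r - i * d)) hin

end GridMax

section Monotonization

/-- Below `α`, the map `g` moves rationals strictly closer to `α` without reaching it. -/
def SpeedsUpBelow (α : ℝ) (g : ℚ → ℚ) : Prop :=
  ∀ q : ℚ, (q : ℝ) < α → (q : ℝ) < g q ∧ (g q : ℝ) < α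

/-- An approximate upper bound for `a` on `[M, r]`: the maximum of `a` over a grid of mesh
`δ * (a r - r)`. The grid reaches `M` because `x ≤ x.num.toNat` for all rational `x`, and
`1 ≤ d.den * d` for `d > 0`. If `a r ≤ r`, which cannot happen when `a` speeds up below `α` and
`r < α`, the value is `r`, so that points beyond `α` keep values beyond `α`. -/
def leftMax (a : ℚ → ℚ) (δ M r : ℚ) : ℚ :=
  if a r ≤ r then r
  else gridMax a r (δ * (a r - r)) ((r - M).num.toNat * (δ * (a r - r)).den)

variable {a : ℚ → ℚ} {δ M : ℚ}

theorem le_leftMax (r : ℚ) : r ≤ leftMax a δ M r := by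
  rw [leftMax]
  split_ifs with h
  · exact le_rfl
  · exact (le_of_not_ge h).trans (le_gridMax ..)

theorem lt_leftMax {r : ℚ} (hr : r < a r) : r < leftMax a δ M r := by
  rw [leftMax, if_neg hr.not_ge]
  exact hr.trans_le (le_gridMax ..)

theorem exists_leftMax_eq {r : ℚ} (hδ : 0 ≤ δ) (hr : r < a r) :
    ∃ p ≤ r, leftMax a δ M r = a p := by
  rw [leftMax, if_neg hr.not_ge]
  exact exists_gridMax_eq a r (mul_nonneg hδ (sub_nonneg.2 hr.le)) _

theorem le_num_toNat_mul_den_mul (x : ℚ) {d : ℚ} (hd : 0 < d) :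
    x ≤ (x.num.toNat * d.den : ℕ) * d := by
  have hx : x ≤ x.num.toNat := by
    rcases le_total x 0 with h | h
    · exact h.trans (Nat.cast_nonneg _)
    · calc x ≤ x * x.den := le_mul_of_one_le_right h (by exact_mod_cast x.den_pos)
        _ = x.num := x.mul_den_eq_num
        _ ≤ x.num.toNat := by exact_mod_cast Int.self_le_toNat _
  have hd' : (1 : ℚ) ≤ d.den * d := by
    rw [mul_comm, d.mul_den_eq_num]
    exact_mod_cast Rat.num_pos.2 hd
  calc x ≤ x.num.toNat * 1 := by rwa [mul_one]
    _ ≤ x.num.toNat * (d.den * d) := by gcongr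
    _ = (x.num.toNat * d.den : ℕ) * d := by push_cast; ring

theorem sub_le_leftMax {K : ℚ} (hK : 0 ≤ K) (ha : Monotone fun q => a q + K * q) (hδ : 0 < δ)
    {q r : ℚ} (hMq : M ≤ q) (hqr : q ≤ r) (hr : r < a r) :
    a q - K * (δ * (a r - r)) ≤ leftMax a δ M r := by
  rw [leftMax, if_neg hr.not_ge]
  have hd : 0 < δ * (a r - r) := mul_pos hδ (sub_pos.2 hr)
  exact sub_le_gridMax hK ha hd hqr
    ((sub_le_sub_left hMq r).trans (le_num_toNat_mul_den_mul _ hd))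

theorem computable_leftMax (ha : Computable a) : Computable (leftMax a δ M) := by
  have hd : Computable fun r => δ * (a r - r) :=
    computable_rat_mul.comp (Computable.const δ) (computable_rat_sub.comp ha Computable.id)
  have hn : Computable fun r => (r - M).num.toNat * (δ * (a r - r)).den :=
    Primrec.nat_mul.to_comp.comp
      (primrec_int_toNat.to_comp.comp
        (computable_rat_num.comp (computable_rat_sub.comp Computable.id (Computable.const M))))
      (computable_rat_den.comp hd)
  have hgrid : Computable₂ fun (r : ℚ) (i : ℕ) => a (r - i * (δ * (a r - r))) :=
    ha.comp (computable_rat_sub.comp Computable.fst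
      (computable_rat_mul.comp (computable_rat_natCast.comp Computable.snd)
        (hd.comp Computable.fst)))
  exact computable_ite (computablePred_comp computablePred_rat_le (ha.pair Computable.id))
    Computable.id ((computable_partialSups computablePred_rat_le hgrid).comp Computable.id hn)

variable {α : ℝ}

theorem SpeedsUpBelow.leftMax_lt (hα : SpeedsUpBelow α a) (hδ : 0 ≤ δ) {r : ℚ}
    (hr : (r : ℝ) < α) : (leftMax a δ M r : ℝ) < α := by
  obtain ⟨p, hpr, hp⟩ := exists_leftMax_eq (M := M) hδ (Rat.cast_lt.1 (hα r hr).1)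
  rw [hp]
  exact (hα p ((Rat.cast_le.2 hpr).trans_lt hr)).2

theorem SpeedsUpBelow.speedsUpBelow_monotonize_leftMax (hα : SpeedsUpBelow α a) (hδ : 0 ≤ δ) :
    SpeedsUpBelow α (monotonize (leftMax a δ M)) := by
  intro q hq
  obtain ⟨⟨p, hpq, hp⟩, r, hqr, hr⟩ := exists_le_monotonize_le (leftMax a δ M) q
  constructor
  · refine Rat.cast_lt.2 (lt_of_lt_of_le ?_ hr)
    rcases lt_or_ge (r : ℝ) α with hrα | hrα
    · exact hqr.trans_lt (lt_leftMax (Rat.cast_lt.1 (hα r hrα).1))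
    · exact lt_of_lt_of_le (Rat.cast_lt.1 (hq.trans_le hrα)) (le_leftMax r)
  · exact (Rat.cast_le.2 hp).trans_lt (hα.leftMax_lt hδ ((Rat.cast_le.2 hpq).trans_lt hq))

theorem SpeedsUpBelow.sub_le_monotonize_leftMax {K : ℚ} (hα : SpeedsUpBelow α a) (hK : 0 ≤ K)
    (ha : Monotone fun q => a q + K * q) (hδ : 0 < δ) {q : ℚ} (hMq : M ≤ q) (hq : (q : ℝ) < α) :
    (a q : ℝ) - K * δ * (α - q) ≤ monotonize (leftMax a δ M) q := by
  obtain ⟨-, r, hqr, hr⟩ := exists_le_monotonize_le (leftMax a δ M) q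
  refine le_trans ?_ (Rat.cast_le.2 hr)
  have hKδ : (0 : ℝ) ≤ K * δ := by exact_mod_cast mul_nonneg hK hδ.le
  rcases lt_or_ge (r : ℝ) α with hrα | hrα
  · have hqr' : (q : ℝ) ≤ r := Rat.cast_le.2 hqr
    calc (a q : ℝ) - K * δ * (α - q)
      _ ≤ a q - K * δ * (a r - r) := by
        gcongr
        exact (hα r hrα).2.le
      _ = ((a q - K * (δ * (a r - r)) : ℚ) : ℝ) := by push_cast; ring
      _ ≤ leftMax a δ M r :=
        Rat.cast_le.2 (sub_le_leftMax hK ha hδ hMq hqr (Rat.cast_lt.1 (hα r hrα).1))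
  · calc (a q : ℝ) - K * δ * (α - q)
      _ ≤ a q := sub_le_self _ (mul_nonneg hKδ (sub_nonneg.2 hq.le))
      _ ≤ α := (hα q hq).2.le
      _ ≤ r := hrα
      _ ≤ leftMax a δ M r := Rat.cast_le.2 (le_leftMax r)

theorem SpeedsUpBelow.exists_monotone (hα : SpeedsUpBelow α a) (hcomp : Computable a) {K : ℚ}
    (hK : 0 ≤ K) (ha : Monotone fun q => a q + K * q) (M : ℚ) {ε : ℝ} (hε : 0 < ε) :
    ∃ h : ℚ → ℚ, Computable h ∧ Monotone h ∧ SpeedsUpBelow α h ∧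
      ∀ q : ℚ, M ≤ q → (q : ℝ) < α → (a q : ℝ) - ε * (α - q) ≤ h q := by
  have hK' : (0 : ℝ) < K + 1 := by exact_mod_cast lt_of_le_of_lt hK (lt_add_one K)
  obtain ⟨δ, hδ, hδε⟩ := exists_rat_btwn (div_pos hε hK')
  rw [lt_div_iff₀ hK'] at hδε
  replace hδ : 0 < δ := Rat.cast_pos.1 hδ
  refine ⟨monotonize (leftMax a δ M),
    computable_monotonize computablePred_rat_le computablePred_rat_le (computable_leftMax hcomp),
    monotone_monotonize _, hα.speedsUpBelow_monotonize_leftMax hδ.le, fun q hMq hq => ?_⟩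
  refine le_trans ?_ (hα.sub_le_monotonize_leftMax hK ha hδ hMq hq)
  have hKδ : (K : ℝ) * δ ≤ ε := by
    have : (0 : ℝ) < δ := Rat.cast_pos.2 hδ
    linarith
  gcongr

end Monotonization

section Amplification

/-- The map that moves `max q M` by `c` times as much as `g` does; the maximum with `M` makes it
depend only on the part of `g` where the amplified steps are known to stay below `α`. -/
def amplify (g : ℚ → ℚ) (c M q : ℚ) : ℚ :=
  max q M + c * (g (max q M) - max q M)

variable {g : ℚ → ℚ} {c M : ℚ}

theorem amplify_of_le {q : ℚ} (hq : M ≤ q) : amplify g c M q = q + c * (g q - q) := by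
  rw [amplify, max_eq_left hq]

theorem computable_amplify (hg : Computable g) : Computable (amplify g c M) := by
  have hmax : Computable fun q : ℚ => max q M :=
    computable_max computablePred_rat_le Computable.id (Computable.const M)
  exact computable_rat_add.comp hmax (computable_rat_mul.comp (Computable.const c)
    (computable_rat_sub.comp (hg.comp hmax) hmax))

theorem monotone_amplify_add (hg : Monotone g) (hc : 1 ≤ c) :
    Monotone fun q => amplify g c M q + (c - 1) * q := by
  intro q r hqr
  have hlip : max r M - max q M ≤ r - q := by
    rcases le_total r M with h | h
    · rw [max_eq_right h, max_eq_right (hqr.trans h)]; linarith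
    · rw [max_eq_left h]; linarith [le_max_left q M]
  have hg' : c * g (max q M) ≤ c * g (max r M) :=
    mul_le_mul_of_nonneg_left (hg (max_le_max_right M hqr)) (by linarith)
  have hlip' := mul_le_mul_of_nonneg_left hlip (sub_nonneg.2 hc)
  simp only [amplify]
  linarith

variable {α : ℝ}

theorem SpeedsUpBelow.speedsUpBelow_amplify (hg : SpeedsUpBelow α g) (hc : 0 < c) (hM : (M : ℝ) < α)
    (hlt : ∀ q : ℚ, M ≤ q → (q : ℝ) < α → ((q + c * (g q - q) : ℚ) : ℝ) < α) :
    SpeedsUpBelow α (amplify g c M) := by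
  intro q hq
  have hmax : ((max q M : ℚ) : ℝ) < α := by rw [Rat.cast_max]; exact max_lt hq hM
  refine ⟨Rat.cast_lt.2 ?_, hlt _ (le_max_right q M) hmax⟩
  calc q ≤ max q M := le_max_left q M
    _ < amplify g c M q :=
      lt_add_of_pos_right _ (mul_pos hc (sub_pos.2 (Rat.cast_lt.1 (hg _ hmax).1)))

end Amplification

section GapRatio

/-- The filter of rationals tending to `α` from below. -/
def ratNhdsLT (α : ℝ) : Filter ℚ :=
  Filter.comap (fun q : ℚ => (q : ℝ)) (𝓝[<] α)

/-- The fraction of the distance from `q` to `α` that is left after applying `g`. -/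
noncomputable def gapRatio (α : ℝ) (g : ℚ → ℚ) (q : ℚ) : ℝ := (α - g q) / (α - q)

variable {α : ℝ} {g : ℚ → ℚ}

theorem totalRhoSpeedable_iff {ρ : ℝ} :
    TotalRhoSpeedable α ρ ↔ ∃ g : ℚ → ℚ, Computable g ∧ Monotone g ∧ SpeedsUpBelow α g ∧
      Filter.liminf (gapRatio α g) (ratNhdsLT α) ≤ ρ :=
  Iff.rfl

theorem eventually_ratNhdsLT {p : ℚ → Prop} :
    (∀ᶠ q in ratNhdsLT α, p q) ↔
      ∃ M : ℚ, (M : ℝ) < α ∧ ∀ q : ℚ, M ≤ q → (q : ℝ) < α → p q := by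
  refine ((nhdsLT_basis α).comap _).eventually_iff.trans ⟨?_, ?_⟩
  · rintro ⟨l, hl, h⟩
    obtain ⟨M, hlM, hM⟩ := exists_rat_btwn hl
    exact ⟨M, hM, fun q hMq hq => h ⟨hlM.trans_le (Rat.cast_le.2 hMq), hq⟩⟩
  · rintro ⟨M, hM, h⟩
    exact ⟨M, hM, fun q hq => h q (Rat.cast_lt.1 hq.1).le hq.2⟩

instance neBot_ratNhdsLT : (ratNhdsLT α).NeBot := by
  refine Filter.neBot_iff.2 fun h => ?_
  obtain ⟨M, hM, hfalse⟩ := eventually_ratNhdsLT.1 (Filter.empty_mem_iff_bot.2 h)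
  exact hfalse M le_rfl hM

theorem eventually_lt_ratNhdsLT : ∀ᶠ q : ℚ in ratNhdsLT α, (q : ℝ) < α :=
  let ⟨M, hM⟩ := exists_rat_lt α
  eventually_ratNhdsLT.2 ⟨M, hM, fun _ _ hq => hq⟩

theorem SpeedsUpBelow.eventually_gapRatio_mem_Icc (hg : SpeedsUpBelow α g) :
    ∀ᶠ q in ratNhdsLT α, gapRatio α g q ∈ Set.Icc 0 1 := by
  filter_upwards [eventually_lt_ratNhdsLT] with q hq
  have hgap : 0 < α - q := sub_pos.2 hq
  obtain ⟨hlt, hltα⟩ := hg q hq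
  exact ⟨div_nonneg (sub_nonneg.2 hltα.le) hgap.le, (div_le_one hgap).2 (by linarith)⟩

theorem SpeedsUpBelow.isBoundedUnder_gapRatio (hg : SpeedsUpBelow α g) :
    (ratNhdsLT α).IsBoundedUnder (· ≥ ·) (gapRatio α g) :=
  ⟨0, hg.eventually_gapRatio_mem_Icc.mono fun _ h => h.1⟩

theorem SpeedsUpBelow.isCoboundedUnder_gapRatio (hg : SpeedsUpBelow α g) :
    (ratNhdsLT α).IsCoboundedUnder (· ≥ ·) (gapRatio α g) :=
  Filter.isCoboundedUnder_ge_of_eventually_le _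
    (hg.eventually_gapRatio_mem_Icc.mono fun _ h => h.2)

theorem sub_amplified_eq {c q : ℚ} (hq : (q : ℝ) < α) :
    α - ((q + c * (g q - q) : ℚ) : ℝ) = (1 - c * (1 - gapRatio α g q)) * (α - q) := by
  have hgap : α - q ≠ 0 := (sub_pos.2 hq).ne'
  push_cast
  rw [gapRatio]
  field_simp
  ring

theorem SpeedsUpBelow.exists_amplification (hg : SpeedsUpBelow α g) {ρ : ℝ}
    (hρ : ρ ≤ Filter.liminf (gapRatio α g) (ratNhdsLT α))
    (hlt : Filter.liminf (gapRatio α g) (ratNhdsLT α) < 1) (hρ0 : 0 < ρ) :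
    ∃ c : ℚ, 1 ≤ c ∧
      (∀ᶠ q in ratNhdsLT α, ((q + c * (g q - q) : ℚ) : ℝ) < α) ∧
      ∃ᶠ q in ratNhdsLT α, α - ((q + c * (g q - q) : ℚ) : ℝ) < ρ * (α - q) := by
  set L := Filter.liminf (gapRatio α g) (ratNhdsLT α)
  have hL : 0 < 1 - L := sub_pos.2 hlt
  obtain ⟨c, hcρ, hc1⟩ := exists_rat_btwn
    (div_lt_div_of_pos_right (show 1 - ρ < 1 by linarith) hL)
  have hc : (1 : ℝ) < c := ((one_le_div hL).2 (by linarith)).trans_lt hcρ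
  have hc0 : (0 : ℝ) < c := one_pos.trans hc
  rw [div_lt_iff₀ hL] at hcρ
  rw [lt_div_iff₀ hL] at hc1
  have hev : ∀ᶠ q in ratNhdsLT α, 1 - 1 / c < gapRatio α g q := by
    refine Filter.eventually_lt_of_lt_liminf ?_ hg.isBoundedUnder_gapRatio
    linarith [(lt_div_iff₀' hc0).2 hc1]
  have hfreq : ∃ᶠ q in ratNhdsLT α, gapRatio α g q < 1 - (1 - ρ) / c := by
    refine Filter.frequently_lt_of_liminf_lt hg.isCoboundedUnder_gapRatio ?_
    linarith [(div_lt_iff₀' hc0).2 hcρ]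
  refine ⟨c, by exact_mod_cast hc.le, ?_, ?_⟩
  · filter_upwards [hev, eventually_lt_ratNhdsLT] with q hratio hq
    rw [← sub_pos, sub_amplified_eq hq]
    have := (lt_div_iff₀' hc0).1 (show 1 - gapRatio α g q < 1 / c by linarith)
    exact mul_pos (sub_pos.2 this) (sub_pos.2 hq)
  · refine (hfreq.and_eventually eventually_lt_ratNhdsLT).mono fun q hq' => ?_
    obtain ⟨hratio, hq⟩ := hq'
    rw [sub_amplified_eq hq]
    have := (div_lt_iff₀' hc0).1 (show (1 - ρ) / c < 1 - gapRatio α g q by linarith)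
    exact mul_lt_mul_of_pos_right (by linarith) (sub_pos.2 hq)

theorem SpeedsUpBelow.liminf_gapRatio_le (hg : SpeedsUpBelow α g) {ρ : ℝ}
    (hfreq : ∃ᶠ q in ratNhdsLT α, α - g q ≤ ρ * (α - q)) :
    Filter.liminf (gapRatio α g) (ratNhdsLT α) ≤ ρ :=
  Filter.liminf_le_of_frequently_le
    ((hfreq.and_eventually eventually_lt_ratNhdsLT).mono fun _ ⟨hle, hq⟩ =>
      (div_le_iff₀ (sub_pos.2 hq)).2 hle)
    hg.isBoundedUnder_gapRatio

end GapRatio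

theorem totalSpeedable_independent_of_rho_general (ρ₁ ρ₂ : ℝ) (h₁ : ρ₁ < 1) (h₂ : 0 < ρ₂)
    (α : ℝ) (h : TotalRhoSpeedable α ρ₁) : TotalRhoSpeedable α ρ₂ := by
  obtain ⟨g, hcomp, hmono, hg, hle⟩ := totalRhoSpeedable_iff.1 h
  rcases le_or_gt (Filter.liminf (gapRatio α g) (ratNhdsLT α)) ρ₂ with hρ | hρ
  · exact ⟨g, hcomp, hmono, hg, hρ⟩
  obtain ⟨c, hc, hev, hfreq⟩ :=
    hg.exists_amplification ((half_lt_self h₂).trans hρ).le (hle.trans_lt h₁) (half_pos h₂)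
  obtain ⟨M, hM, hlt⟩ := eventually_ratNhdsLT.1 hev
  have hamplify := hg.speedsUpBelow_amplify (one_pos.trans_le hc) hM hlt
  obtain ⟨f, hfcomp, hfmono, hf, hnear⟩ := hamplify.exists_monotone (computable_amplify hcomp)
    (sub_nonneg.2 hc) (monotone_amplify_add hmono hc) M (half_pos h₂)
  refine totalRhoSpeedable_iff.2 ⟨f, hfcomp, hfmono, hf, hf.liminf_gapRatio_le ?_⟩
  have hnear' : ∀ᶠ q in ratNhdsLT α, ((q + c * (g q - q) : ℚ) : ℝ) - ρ₂ / 2 * (α - q) ≤ f q :=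
    eventually_ratNhdsLT.2 ⟨M, hM, fun q hMq hq => amplify_of_le (g := g) hMq ▸ hnear q hMq hq⟩
  exact (hfreq.and_eventually hnear').mono fun q hq => by linarith [hq.1, hq.2]

theorem totalSpeedable_independent_of_rho (ρ₁ ρ₂ : ℝ)
    (h₁ : ρ₁ ∈ Set.Ioo (0 : ℝ) 1) (h₂ : ρ₂ ∈ Set.Ioo (0 : ℝ) 1)
    (α : ℝ) (hα : LeftCE α) (h : TotalRhoSpeedable α ρ₁) :
    TotalRhoSpeedable α ρ₂ :=
  totalSpeedable_independent_of_rho_general ρ₁ ρ₂ h₁.2 h₂.1 α h
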